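/- Let n ≥ 1 and let γⁿ be the standard Gaussian probability measure on ℝⁿ. For every λ ∈ ℕ (λ ≥ 0), the number of indices k ≥ 1 with λ_k^Lip(ℝⁿ,|·|,γⁿ) ≤ λ equals the binomial coefficient C(n+λ, λ). In other words, the eigenvalues of the Gaussian space, counted with multiplicity in non-decreasing order, are the non-negative integers, where each integer l ∈ ℕ occurs with multiplicity C(n−1+l, l). -/

import Mathlib

open MeasureTheory Filter Topology ENNReal

/-- The local Lipschitz constant `|∇f|(x) = limsup_{y→x} |f(y)-f(x)|/d(y,x)`
(equal to `0` at isolated points, by the convention `Real.sInf ∅ = 0`). -/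
noncomputable def localLip {Ω : Type*} [PseudoMetricSpace Ω] (f : Ω → ℝ) (x : Ω) : ℝ :=
  Filter.limsup (fun y => |f y - f x| / dist y x) (nhdsWithin x {x}ᶜ)

/-- Membership in the metric Sobolev space `W^{1,2}_Lip(Ω,d,μ)`. -/
def memW12Lip {Ω : Type*} [PseudoMetricSpace Ω] [MeasurableSpace Ω]
    (μ : Measure Ω) (f : Ω → ℝ) : Prop :=
  LocallyLipschitz f ∧
    (∫⁻ x, ENNReal.ofReal ((f x) ^ 2) ∂μ) + (∫⁻ x, ENNReal.ofReal ((localLip f x) ^ 2) ∂μ) < ⊤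

/-- The `k`-th metric eigenvalue `λ_k^Lip(Ω,d,μ)`: the infimum over `k`-dimensional
linear subspaces `F ⊆ W^{1,2}_Lip` of the supremum of the Rayleigh quotient over `F`. -/
noncomputable def lambdaLip {Ω : Type*} [PseudoMetricSpace Ω] [MeasurableSpace Ω]
    (μ : Measure Ω) (k : ℕ) : ℝ :=
  sInf { a : ℝ | ∃ F : Submodule ℝ (Ω → ℝ), Module.finrank ℝ F = k ∧
    (∀ f ∈ F, memW12Lip μ f) ∧
    a = sSup { r : ℝ | ∃ f ∈ F, (∫ x, (f x) ^ 2 ∂μ) ≠ 0 ∧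
      r = (∫ x, (localLip f x) ^ 2 ∂μ) / (∫ x, (f x) ^ 2 ∂μ) } }

/-- The standard Gaussian probability measure `γⁿ` on `ℝⁿ`, with density proportional
to `exp(-|x|²/2)` with respect to Lebesgue measure, normalized to total mass one. -/
noncomputable def stdGaussian (n : ℕ) : Measure (EuclideanSpace ℝ (Fin n)) :=
  ((volume.withDensity fun x : EuclideanSpace ℝ (Fin n) =>
      ENNReal.ofReal (Real.exp (-‖x‖ ^ 2 / 2))) Set.univ)⁻¹ •
    volume.withDensity fun x : EuclideanSpace ℝ (Fin n) =>
      ENNReal.ofReal (Real.exp (-‖x‖ ^ 2 / 2))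

/-!
By Rademacher's theorem the local Lipschitz constant of a locally Lipschitz function is the norm of
its gradient almost everywhere, and integration by parts against the Gaussian density (Stein's
lemma) turns the Dirichlet form into `∫ ⟪∇p, ∇f⟫ dγ = ∫ (D p) f dγ`, where
`D p = ∑ i, (xᵢ ∂ᵢ p - ∂ᵢ² p)` and `p` is a polynomial. The operator `D` is triangular for the
filtration by degree, with `N` on the diagonal in degree `N`. Projecting orthogonally degree by
degree bounds the energy of a polynomial of degree `≤ l` by `l` times its `L²` mass, and shows that
a function orthogonal to all these polynomials has energy at least `l + 1` times its mass; the
passage from polynomials to Sobolev functions uses that polynomials are dense in `L²`, the Fourier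
transform of `u dγ` being determined by the moments of `u`. By the min-max principle `λ_k ≤ l`
exactly when `k` is at most the dimension `C(n + l, l)` of the space of polynomials of degree `≤ l`.
-/

open scoped Gradient InnerProductSpace

/-! ### Locally Lipschitz functions -/

section LocallyLipschitz

section NormedSpace

variable {E : Type*} [NormedAddCommGroup E] [NormedSpace ℝ E]

lemma eventually_abs_sub_div_dist_le {f : E → ℝ} {L : E →L[ℝ] ℝ} {x : E}
    (hf : HasFDerivAt f L x) {ε : ℝ} (hε : 0 < ε) :
    ∀ᶠ y in 𝓝[≠] x, |f y - f x| / dist y x ≤ ‖L‖ + ε := by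
  filter_upwards [(hf.isLittleO.def hε).filter_mono nhdsWithin_le_nhds, self_mem_nhdsWithin]
    with y hy hyx
  rw [div_le_iff₀ (dist_pos.2 hyx), dist_eq_norm]
  calc |f y - f x| = ‖L (y - x) + (f y - f x - L (y - x))‖ := by simp
    _ ≤ ‖L (y - x)‖ + ‖f y - f x - L (y - x)‖ := norm_add_le _ _
    _ ≤ ‖L‖ * ‖y - x‖ + ε * ‖y - x‖ := add_le_add (L.le_opNorm _) hy
    _ = (‖L‖ + ε) * ‖y - x‖ := by ring

lemma tendsto_abs_sub_div_dist_along_ray {f : E → ℝ} {L : E →L[ℝ] ℝ} {x : E}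
    (hf : HasFDerivAt f L x) (v : E) :
    Tendsto (fun t : ℝ => |f (x + t • v) - f x| / dist (x + t • v) x) (𝓝[>] 0)
      (𝓝 (|L v| / ‖v‖)) := by
  have hslope : Tendsto (fun t : ℝ => |t⁻¹ • (f (x + t • v) - f x)| / ‖v‖) (𝓝[>] 0)
      (𝓝 (|L v| / ‖v‖)) :=
    (hf.hasLineDerivAt v).tendsto_slope_zero_right.abs.div_const _
  refine hslope.congr fun t => ?_
  rw [dist_eq_norm, add_sub_cancel_left, norm_smul, smul_eq_mul, abs_mul, abs_inv,
    Real.norm_eq_abs, mul_comm |t|⁻¹, ← div_eq_mul_inv, div_div]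

lemma tendsto_add_smul_nhdsNE {v : E} (hv : v ≠ 0) (x : E) :
    Tendsto (fun t : ℝ => x + t • v) (𝓝[>] 0) (𝓝[≠] x) := by
  refine tendsto_nhdsWithin_iff.2 ⟨?_, ?_⟩
  · have hcont : ContinuousAt (fun t : ℝ => x + t • v) 0 := by fun_prop
    simpa [ContinuousAt] using hcont.tendsto.mono_left nhdsWithin_le_nhds
  · filter_upwards [self_mem_nhdsWithin] with t ht
    simp [hv, (Set.mem_Ioi.1 ht).ne']

theorem localLip_eq_norm_of_hasFDerivAt {f : E → ℝ} {L : E →L[ℝ] ℝ} {x : E}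
    (hf : HasFDerivAt f L x) : localLip f x = ‖L‖ := by
  rcases subsingleton_or_nontrivial E with hE | hE
  · have hempty : ({x}ᶜ : Set E) = ∅ :=
      Set.eq_empty_of_forall_notMem fun y hy => hy (Subsingleton.elim y x)
    simp [localLip, hempty, limsup, limsSup, Subsingleton.elim L 0]
  set q : E → ℝ := fun y => |f y - f x| / dist y x
  have hq : ∀ y, 0 ≤ q y := fun y => by positivity
  have hbdd : IsBoundedUnder (· ≤ ·) (𝓝[≠] x) q :=
    ⟨‖L‖ + 1, by simpa using eventually_abs_sub_div_dist_le hf one_pos⟩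
  apply le_antisymm
  · exact _root_.le_of_forall_pos_le_add fun ε hε =>
      limsup_le_of_le (isCoboundedUnder_le_of_le _ hq) (eventually_abs_sub_div_dist_le hf hε)
  · refine L.opNorm_le_bound (le_limsup_of_frequently_le (.of_forall hq) hbdd) fun v => ?_
    rcases eq_or_ne v 0 with rfl | hv
    · simp
    rw [← div_le_iff₀ (norm_pos_iff.2 hv)]
    refine le_of_forall_lt fun c hc => ?_
    obtain ⟨d, hcd, hd⟩ := exists_between hc
    have hray : ∃ᶠ y in 𝓝[≠] x, d ≤ q y := (tendsto_add_smul_nhdsNE hv x).frequently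
      (((tendsto_abs_sub_div_dist_along_ray hf v).eventually_const_le hd).frequently)
    exact hcd.trans_le (le_limsup_of_frequently_le hray hbdd)

end NormedSpace

section FiniteDimensional

variable {E : Type*} [NormedAddCommGroup E] [NormedSpace ℝ E] [FiniteDimensional ℝ E]

lemma exists_lipschitzOnWith_closedBall {f : E → ℝ} (hf : LocallyLipschitz f) (R : ℝ) :
    ∃ K, LipschitzOnWith K f (Metric.closedBall 0 R) :=
  have := FiniteDimensional.proper ℝ E
  hf.locallyLipschitzOn.exists_lipschitzOnWith_of_compact (isCompact_closedBall 0 R)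

/-- A sequence of compactly supported `C¹` cutoffs `χ k` exhausting the space, with derivatives in
the direction `v` bounded by `M` and vanishing in the limit. -/
structure IsCutoffSequence (χ : ℕ → E → ℝ) (v : E) (M : ℝ) : Prop where
  contDiff : ∀ k, ContDiff ℝ 1 (χ k)
  hasCompactSupport : ∀ k, HasCompactSupport (χ k)
  norm_le_one : ∀ k x, ‖χ k x‖ ≤ 1
  tendsto_one : ∀ x, Tendsto (χ · x) atTop (𝓝 1)
  norm_fderiv_le : ∀ k x, ‖fderiv ℝ (χ k) x v‖ ≤ M
  tendsto_fderiv : ∀ x, Tendsto (fun k => fderiv ℝ (χ k) x v) atTop (𝓝 0)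

theorem exists_isCutoffSequence (v : E) :
    ∃ (χ : ℕ → E → ℝ) (M : ℝ), IsCutoffSequence χ v M := by
  let φ : ContDiffBump (0 : E) := ⟨1, 2, one_pos, one_lt_two⟩
  obtain ⟨C, hC⟩ : ∃ C, ∀ x, ‖fderiv ℝ φ x v‖ ≤ C :=
    (φ.hasCompactSupport.fderiv_apply ℝ v).exists_bound_of_continuous
      ((φ.contDiff.continuous_fderiv one_ne_zero).clm_apply continuous_const)
  have hscale : Tendsto (fun k : ℕ => ((k : ℝ) + 1)⁻¹) atTop (𝓝 0) := by
    simpa using tendsto_one_div_add_atTop_nhds_zero_nat (𝕜 := ℝ)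
  let χ : ℕ → E → ℝ := fun k x => φ (((k : ℝ) + 1)⁻¹ • x)
  have hbound : ∀ k x, ‖fderiv ℝ (χ k) x v‖ ≤ ((k : ℝ) + 1)⁻¹ * C := fun k x => by
    rw [fderiv_comp_smul, _root_.smul_apply, norm_smul, Real.norm_of_nonneg (by positivity)]
    gcongr
    exact hC _
  refine ⟨χ, C, ?_, ?_, ?_, ?_, ?_, ?_⟩
  · exact fun k => φ.contDiff.comp (contDiff_const_smul _)
  · exact fun k => φ.hasCompactSupport.comp_homeomorph
      (Homeomorph.smulOfNeZero ((k : ℝ) + 1)⁻¹ (by positivity))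
  · exact fun k x => (Real.norm_of_nonneg φ.nonneg).trans_le φ.le_one
  · intro x
    have hlim := (φ.continuous.tendsto _).comp (hscale.smul_const x)
    rwa [zero_smul, φ.one_of_mem_closedBall (by simp [φ])] at hlim
  · refine fun k x => (hbound k x).trans (mul_le_of_le_one_left ?_ ?_)
    · exact (norm_nonneg _).trans (hC 0)
    · exact inv_le_one_of_one_le₀ (by simp)
  · exact fun x => squeeze_zero_norm (hbound · x) (by simpa using hscale.mul_const C)

variable [MeasurableSpace E] [BorelSpace E] {μ : Measure E} [μ.IsAddHaarMeasure]

theorem ae_differentiableAt_of_locallyLipschitz {f : E → ℝ} (hf : LocallyLipschitz f) :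
    ∀ᵐ x ∂μ, DifferentiableAt ℝ f x := by
  have hball : ∀ k : ℕ, ∀ᵐ x ∂μ, x ∈ Metric.closedBall (0 : E) k →
      DifferentiableWithinAt ℝ f (Metric.closedBall 0 k) x := fun k =>
    (exists_lipschitzOnWith_closedBall hf k).choose_spec.ae_differentiableWithinAt_of_mem
  filter_upwards [ae_all_iff.2 hball] with x hx
  obtain ⟨k, hk⟩ := exists_nat_gt ‖x‖
  exact (hx k (by simpa using hk.le)).differentiableAt
    (Metric.closedBall_mem_nhds_of_mem (by simpa using hk))

/-! ### Integration by parts -/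

theorem integral_fderiv_mul_eq_neg_of_hasCompactSupport {f g : E → ℝ} (hf : LocallyLipschitz f)
    (hg : ContDiff ℝ 1 g) (hgc : HasCompactSupport g) (v : E) :
    ∫ x, fderiv ℝ f x v * g x ∂μ = -∫ x, f x * fderiv ℝ g x v ∂μ := by
  obtain ⟨R, hR⟩ := hgc.isCompact.isBounded.subset_ball (0 : E)
  obtain ⟨K, hK⟩ := exists_lipschitzOnWith_closedBall hf R
  obtain ⟨F, hF, hfF⟩ := hK.extend_real
  obtain ⟨C, hC⟩ := hg.lipschitzWith_of_hasCompactSupport hgc one_ne_zero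
  have hderiv : ∀ᵐ x ∂μ, fderiv ℝ f x v * g x = lineDeriv ℝ F x v * g x := by
    filter_upwards [ae_differentiableAt_of_locallyLipschitz hf] with x hx
    by_cases hgx : x ∈ tsupport g
    · have hloc : f =ᶠ[𝓝 x] F :=
        (hfF.mono Metric.ball_subset_closedBall).eventuallyEq_of_mem
          (Metric.isOpen_ball.mem_nhds (hR hgx))
      rw [← hloc.lineDeriv_eq, hx.lineDeriv_eq_fderiv]
    · simp [image_eq_zero_of_notMem_tsupport hgx]
  have hfun : ∀ x, lineDeriv ℝ g x (-v) * F x = -(f x * fderiv ℝ g x v) := fun x => by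
    rw [(hg.differentiable one_ne_zero x).lineDeriv_eq_fderiv, map_neg]
    by_cases hgx : x ∈ tsupport g
    · rw [hfF (Metric.ball_subset_closedBall (hR hgx))]; ring
    · simp [fderiv_of_notMem_tsupport ℝ hgx]
  rw [integral_congr_ae hderiv, hF.integral_lineDeriv_mul_eq hC hgc v, ← integral_neg]
  exact integral_congr_ae (ae_of_all _ hfun)

theorem integral_fderiv_eq_zero {f : E → ℝ} (hf : LocallyLipschitz f) {v : E}
    (hfi : Integrable f μ) (hfi' : Integrable (fun x => fderiv ℝ f x v) μ) :
    ∫ x, fderiv ℝ f x v ∂μ = 0 := by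
  obtain ⟨χ, M, hχ⟩ := exists_isCutoffSequence v
  have hleft : Tendsto (fun k => ∫ x, fderiv ℝ f x v * χ k x ∂μ) atTop
      (𝓝 (∫ x, fderiv ℝ f x v * 1 ∂μ)) := by
    refine tendsto_integral_of_dominated_convergence (fun x => ‖fderiv ℝ f x v‖)
      (fun k => hfi'.1.mul (hχ.contDiff k).continuous.aestronglyMeasurable) hfi'.norm
      (fun k => ae_of_all _ fun x => ?_)
      (ae_of_all _ fun x => (hχ.tendsto_one x).const_mul (fderiv ℝ f x v))
    rw [norm_mul]
    exact mul_le_of_le_one_right (norm_nonneg _) (hχ.norm_le_one k x)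
  have hright : Tendsto (fun k => -∫ x, f x * fderiv ℝ (χ k) x v ∂μ) atTop
      (𝓝 (-∫ x, f x * 0 ∂μ)) := by
    refine (tendsto_integral_of_dominated_convergence (fun x => ‖f x‖ * M)
      (fun k => hfi.1.mul ?_) (hfi.norm.mul_const M) (fun k => ae_of_all _ fun x => ?_)
      (ae_of_all _ fun x => (hχ.tendsto_fderiv x).const_mul (f x))).neg
    · exact (((hχ.contDiff k).continuous_fderiv one_ne_zero).clm_apply
        continuous_const).aestronglyMeasurable
    · rw [Pi.mul_apply, norm_mul]
      exact mul_le_mul_of_nonneg_left (hχ.norm_fderiv_le k x) (norm_nonneg _)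
  have hparts : ∀ k, ∫ x, fderiv ℝ f x v * χ k x ∂μ = -∫ x, f x * fderiv ℝ (χ k) x v ∂μ :=
    fun k => integral_fderiv_mul_eq_neg_of_hasCompactSupport hf (hχ.contDiff k)
      (hχ.hasCompactSupport k) v
  simpa using tendsto_nhds_unique hleft (hright.congr fun k => (hparts k).symm)

end FiniteDimensional

end LocallyLipschitz

/-! ### The metric Sobolev space of an absolutely continuous measure -/

section L2

variable {α F : Type*} [MeasurableSpace α] {μ : Measure α} [NormedAddCommGroup F] {f g : α → F}

lemma memLp_two_iff_lintegral_ofReal_norm_sq_lt_top (hf : AEStronglyMeasurable f μ) :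
    MemLp f 2 μ ↔ ∫⁻ x, ENNReal.ofReal (‖f x‖ ^ 2) ∂μ < ⊤ := by
  rw [memLp_two_iff_integrable_sq_norm hf, Integrable,
    hasFiniteIntegral_iff_ofReal (ae_of_all _ fun x => sq_nonneg _)]
  exact and_iff_right (hf.norm.pow 2)

variable [InnerProductSpace ℝ F]

lemma inner_toLp_toLp (hf : MemLp f 2 μ) (hg : MemLp g 2 μ) :
    ⟪hf.toLp f, hg.toLp g⟫_ℝ = ∫ x, ⟪f x, g x⟫_ℝ ∂μ := by
  rw [L2.inner_def]
  refine integral_congr_ae ?_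
  filter_upwards [hf.coeFn_toLp, hg.coeFn_toLp] with x hfx hgx
  rw [hfx, hgx]

lemma norm_toLp_sq (hf : MemLp f 2 μ) : ‖hf.toLp f‖ ^ 2 = ∫ x, ‖f x‖ ^ 2 ∂μ := by
  simp only [← real_inner_self_eq_norm_sq, inner_toLp_toLp]

end L2

section Sobolev

variable {E : Type*} [NormedAddCommGroup E] [InnerProductSpace ℝ E] [FiniteDimensional ℝ E]

lemma gradient_const_smul (c : ℝ) (f : E → ℝ) : ∇ (c • f) = c • ∇ f := by
  ext1 x
  simp [gradient, fderiv_const_smul_field]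

variable [MeasurableSpace E] [BorelSpace E] {μ : Measure E} {f g : E → ℝ}

lemma measurable_gradient (f : E → ℝ) : Measurable (∇ f) :=
  (InnerProductSpace.toDual ℝ E).symm.continuous.measurable.comp (measurable_fderiv ℝ f)

theorem localLip_ae_eq_norm_gradient (hμ : μ ≪ volume) (hf : LocallyLipschitz f) :
    ∀ᵐ x ∂μ, localLip f x = ‖∇ f x‖ := by
  filter_upwards [hμ.ae_le (ae_differentiableAt_of_locallyLipschitz hf)] with x hx
  rw [localLip_eq_norm_of_hasFDerivAt hx.hasFDerivAt, ← toDual_gradient,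
    LinearIsometryEquiv.norm_map]

theorem memW12Lip_iff (hμ : μ ≪ volume) :
    memW12Lip μ f ↔ LocallyLipschitz f ∧ MemLp f 2 μ ∧ MemLp (∇ f) 2 μ := by
  refine and_congr_right fun hf => ?_
  have hgrad : ∫⁻ x, ENNReal.ofReal (localLip f x ^ 2) ∂μ =
      ∫⁻ x, ENNReal.ofReal (‖∇ f x‖ ^ 2) ∂μ := by
    refine lintegral_congr_ae ?_
    filter_upwards [localLip_ae_eq_norm_gradient hμ hf] with x hx
    rw [hx]
  rw [memLp_two_iff_lintegral_ofReal_norm_sq_lt_top hf.continuous.aestronglyMeasurable,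
    memLp_two_iff_lintegral_ofReal_norm_sq_lt_top
      (measurable_gradient f).aestronglyMeasurable, hgrad, ENNReal.add_lt_top]
  simp only [Real.norm_eq_abs, sq_abs]

lemma gradient_add_ae_eq (hμ : μ ≪ volume) (hf : LocallyLipschitz f) (hg : LocallyLipschitz g) :
    ∇ (f + g) =ᵐ[μ] ∇ f + ∇ g := by
  filter_upwards [hμ.ae_le (ae_differentiableAt_of_locallyLipschitz hf),
    hμ.ae_le (ae_differentiableAt_of_locallyLipschitz hg)] with x hfx hgx
  simp [gradient, fderiv_add hfx hgx]

/-- The metric Sobolev space `W^{1,2}_Lip(E, μ)` of an absolutely continuous measure, as a space of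
functions. Absolute continuity is what makes it linear, through Rademacher's theorem. -/
def sobolevLip (hμ : μ ≪ volume) : Submodule ℝ (E → ℝ) where
  carrier := {f | memW12Lip μ f}
  add_mem' {f g} hf hg := by
    obtain ⟨hfLip, hf2, hf'2⟩ := (memW12Lip_iff hμ).1 hf
    obtain ⟨hgLip, hg2, hg'2⟩ := (memW12Lip_iff hμ).1 hg
    exact (memW12Lip_iff hμ).2 ⟨hfLip.add hgLip, hf2.add hg2,
      (memLp_congr_ae (gradient_add_ae_eq hμ hfLip hgLip)).2 (hf'2.add hg'2)⟩
  zero_mem' := (memW12Lip_iff hμ).2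
    ⟨.const 0, .zero, by simp [Pi.zero_def]⟩
  smul_mem' c f hf := by
    obtain ⟨hfLip, hf2, hf'2⟩ := (memW12Lip_iff hμ).1 hf
    exact (memW12Lip_iff hμ).2 ⟨(lipschitzWith_smul c).locallyLipschitz.comp hfLip,
      hf2.const_smul c, by simpa only [gradient_const_smul] using hf'2.const_smul c⟩

namespace sobolevLip

variable {hμ : μ ≪ volume}

lemma locallyLipschitz (f : sobolevLip hμ) : LocallyLipschitz (f : E → ℝ) := f.2.1

lemma memLp (f : sobolevLip hμ) : MemLp (f : E → ℝ) 2 μ := ((memW12Lip_iff hμ).1 f.2).2.1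

lemma memLp_gradient (f : sobolevLip hμ) : MemLp (∇ (f : E → ℝ)) 2 μ :=
  ((memW12Lip_iff hμ).1 f.2).2.2

variable (hμ) in
/-- The canonical map from the metric Sobolev space to `L²(μ)`. -/
noncomputable def toL2 : sobolevLip hμ →ₗ[ℝ] Lp ℝ 2 μ where
  toFun f := (memLp f).toLp f
  map_add' f g := MemLp.toLp_add (memLp f) (memLp g)
  map_smul' c f := MemLp.toLp_const_smul c (memLp f)

variable (hμ) in
/-- The gradient, as a linear map from the metric Sobolev space to `L²(μ; E)`. -/
noncomputable def gradL2 : sobolevLip hμ →ₗ[ℝ] Lp E 2 μ where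
  toFun f := (memLp_gradient f).toLp (∇ f.1)
  map_add' f g :=
    (MemLp.toLp_congr _ ((memLp_gradient f).add (memLp_gradient g))
      (gradient_add_ae_eq hμ (locallyLipschitz f) (locallyLipschitz g))).trans
      (MemLp.toLp_add (memLp_gradient f) (memLp_gradient g))
  map_smul' c f :=
    (MemLp.toLp_congr _ ((memLp_gradient f).const_smul c)
      (.of_eq (gradient_const_smul c f.1))).trans
      (MemLp.toLp_const_smul c (memLp_gradient f))

lemma inner_toL2 (f g : sobolevLip hμ) : ⟪toL2 hμ f, toL2 hμ g⟫_ℝ = ∫ x, f.1 x * g.1 x ∂μ :=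
  (inner_toLp_toLp (memLp f) (memLp g)).trans (by simp [mul_comm])

lemma inner_gradL2 (f g : sobolevLip hμ) :
    ⟪gradL2 hμ f, gradL2 hμ g⟫_ℝ = ∫ x, ⟪∇ f.1 x, ∇ g.1 x⟫_ℝ ∂μ :=
  inner_toLp_toLp (memLp_gradient f) (memLp_gradient g)

lemma norm_toL2_sq (f : sobolevLip hμ) : ‖toL2 hμ f‖ ^ 2 = ∫ x, f.1 x ^ 2 ∂μ :=
  (norm_toLp_sq (memLp f)).trans (by simp)

lemma norm_gradL2_sq (f : sobolevLip hμ) :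
    ‖gradL2 hμ f‖ ^ 2 = ∫ x, localLip f.1 x ^ 2 ∂μ := by
  refine (norm_toLp_sq (memLp_gradient f)).trans (integral_congr_ae ?_)
  filter_upwards [localLip_ae_eq_norm_gradient hμ (locallyLipschitz f)] with x hx
  rw [hx]

lemma toL2_injective [μ.IsOpenPosMeasure] : Function.Injective (toL2 hμ) := fun f g hfg =>
  Subtype.ext <| ((locallyLipschitz f).continuous.ae_eq_iff_eq μ (locallyLipschitz g).continuous).1
    ((MemLp.toLp_eq_toLp_iff (memLp f) (memLp g)).1 hfg)

end sobolevLip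

end Sobolev

/-! ### Variational bounds for the metric eigenvalues -/

section Variational

variable {Ω : Type*} [PseudoMetricSpace Ω] [MeasurableSpace Ω] {μ : Measure Ω}
  {F : Submodule ℝ (Ω → ℝ)} {k : ℕ} {c : ℝ}

variable (μ F) in
/-- The Rayleigh quotients of the functions in `F`, whose supremum enters `lambdaLip`. -/
def rayleighQuotients : Set ℝ :=
  {r | ∃ f ∈ F, (∫ x, f x ^ 2 ∂μ) ≠ 0 ∧ r = (∫ x, localLip f x ^ 2 ∂μ) / ∫ x, f x ^ 2 ∂μ}

lemma rayleighQuotients_nonneg {r : ℝ} (hr : r ∈ rayleighQuotients μ F) : 0 ≤ r := by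
  obtain ⟨f, -, -, rfl⟩ := hr
  positivity

lemma mem_upperBounds_rayleighQuotients
    (hF : ∀ f ∈ F, ∫ x, localLip f x ^ 2 ∂μ ≤ c * ∫ x, f x ^ 2 ∂μ) :
    c ∈ upperBounds (rayleighQuotients μ F) := by
  rintro r ⟨f, hfF, hf, rfl⟩
  have hpos : 0 < ∫ x, f x ^ 2 ∂μ := lt_of_le_of_ne (by positivity) hf.symm
  exact (div_le_iff₀ hpos).2 (hF f hfF)

theorem lambdaLip_le (hc : 0 ≤ c) (hk : Module.finrank ℝ F = k) (hFW : ∀ f ∈ F, memW12Lip μ f)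
    (hF : ∀ f ∈ F, ∫ x, localLip f x ^ 2 ∂μ ≤ c * ∫ x, f x ^ 2 ∂μ) : lambdaLip μ k ≤ c := by
  have hbelow : BddBelow {a | ∃ F : Submodule ℝ (Ω → ℝ), Module.finrank ℝ F = k ∧
      (∀ f ∈ F, memW12Lip μ f) ∧ a = sSup (rayleighQuotients μ F)} := by
    refine ⟨0, ?_⟩
    rintro a ⟨F, -, -, rfl⟩
    exact Real.sSup_nonneg fun r hr => rayleighQuotients_nonneg hr
  exact (csInf_le hbelow ⟨F, hk, hFW, rfl⟩).trans
    (Real.sSup_le (fun r hr => mem_upperBounds_rayleighQuotients hF hr) hc)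

theorem le_lambdaLip
    (hex : ∃ F : Submodule ℝ (Ω → ℝ), Module.finrank ℝ F = k ∧ ∀ f ∈ F, memW12Lip μ f)
    (h : ∀ F : Submodule ℝ (Ω → ℝ), Module.finrank ℝ F = k → (∀ f ∈ F, memW12Lip μ f) →
      BddAbove (rayleighQuotients μ F) ∧ ∃ f ∈ F, (∫ x, f x ^ 2 ∂μ) ≠ 0 ∧
        c * ∫ x, f x ^ 2 ∂μ ≤ ∫ x, localLip f x ^ 2 ∂μ) : c ≤ lambdaLip μ k := by
  obtain ⟨F₀, hF₀, hF₀W⟩ := hex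
  refine le_csInf ⟨_, F₀, hF₀, hF₀W, rfl⟩ ?_
  rintro a ⟨F, hF, hFW, rfl⟩
  obtain ⟨hbdd, f, hfF, hf, hcf⟩ := h F hF hFW
  have hpos : 0 < ∫ x, f x ^ 2 ∂μ := lt_of_le_of_ne (by positivity) hf.symm
  exact ((le_div_iff₀ hpos).2 hcf).trans (le_csSup hbdd ⟨f, hfF, hf, rfl⟩)

end Variational

section LinearAlgebra

theorem exists_le_finrank_eq {K V : Type*} [DivisionRing K] [AddCommGroup V] [Module K V]
    {M : Submodule K V} {k : ℕ} (hk : k ≤ Module.finrank K M) :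
    ∃ F ≤ M, Module.finrank K F = k := by
  obtain ⟨v, hv⟩ := exists_linearIndependent_of_le_finrank hk
  refine ⟨Submodule.span K (Set.range (M.subtype ∘ v)), Submodule.span_le.2 ?_, ?_⟩
  · rintro _ ⟨i, rfl⟩
    exact (v i).2
  · rw [finrank_span_eq_card (hv.map' M.subtype M.ker_subtype), Fintype.card_fin]

variable {V : Type*} [AddCommGroup V] [Module ℝ V] [FiniteDimensional ℝ V]

theorem exists_norm_le_mul_norm {H H' : Type*} [NormedAddCommGroup H] [NormedSpace ℝ H]
    [NormedAddCommGroup H'] [NormedSpace ℝ H'] {A : V →ₗ[ℝ] H} (hA : Function.Injective A)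
    (B : V →ₗ[ℝ] H') : ∃ C, ∀ v, ‖B v‖ ≤ C * ‖A v‖ := by
  let e : V ≃ₗ[ℝ] A.range := LinearEquiv.ofInjective A hA
  let T : A.range →L[ℝ] H' := LinearMap.toContinuousLinearMap (B ∘ₗ e.symm.toLinearMap)
  refine ⟨‖T‖, fun v => ?_⟩
  have hT : T (e v) = B v := by simp [T]
  exact hT ▸ T.le_opNorm (e v)

theorem exists_ne_zero_mem_orthogonal {H : Type*} [NormedAddCommGroup H] [InnerProductSpace ℝ H]
    (A : V →ₗ[ℝ] H) (K : Submodule ℝ H) [FiniteDimensional ℝ K]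
    (hK : Module.finrank ℝ K < Module.finrank ℝ V) : ∃ v ≠ 0, A v ∈ Kᗮ := by
  have hker := LinearMap.ker_ne_bot_of_finrank_lt
    (f := K.orthogonalProjectionOnto.toLinearMap ∘ₗ A) hK
  obtain ⟨v, hv, hv0⟩ := Submodule.exists_mem_ne_zero_of_ne_bot hker
  exact ⟨v, hv0, K.orthogonalProjectionOnto_eq_zero_iff.1 hv⟩

end LinearAlgebra

section SobolevVariational

variable {E : Type*} [NormedAddCommGroup E] [InnerProductSpace ℝ E] [FiniteDimensional ℝ E]
  [MeasurableSpace E] [BorelSpace E] {μ : Measure E} [μ.IsOpenPosMeasure] {hμ : μ ≪ volume}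

open sobolevLip

lemma bddAbove_rayleighQuotients {F : Submodule ℝ (E → ℝ)} [FiniteDimensional ℝ F]
    (hF : F ≤ sobolevLip hμ) : BddAbove (rayleighQuotients μ F) := by
  let ι := Submodule.inclusion hF
  obtain ⟨C, hC⟩ := exists_norm_le_mul_norm (A := toL2 hμ ∘ₗ ι)
    (toL2_injective.comp (Submodule.inclusion_injective hF)) (gradL2 hμ ∘ₗ ι)
  refine ⟨C ^ 2, mem_upperBounds_rayleighQuotients fun f hf => ?_⟩
  have hsq := pow_le_pow_left₀ (norm_nonneg _) (hC ⟨f, hf⟩) 2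
  rwa [mul_pow, LinearMap.comp_apply, LinearMap.comp_apply, norm_toL2_sq, norm_gradL2_sq] at hsq

theorem le_lambdaLip_of_forall_mem_orthogonal {k : ℕ} {c : ℝ}
    (hex : ∃ F : Submodule ℝ (E → ℝ), Module.finrank ℝ F = k ∧ ∀ f ∈ F, memW12Lip μ f)
    (K : Submodule ℝ (Lp ℝ 2 μ)) [FiniteDimensional ℝ K] (hK : Module.finrank ℝ K < k)
    (h : ∀ f : sobolevLip hμ, toL2 hμ f ∈ Kᗮ → c * ‖toL2 hμ f‖ ^ 2 ≤ ‖gradL2 hμ f‖ ^ 2) :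
    c ≤ lambdaLip μ k := by
  refine le_lambdaLip hex fun F hF hFW => ?_
  have : FiniteDimensional ℝ F := Module.finite_of_finrank_pos (hF ▸ hK.pos)
  let ι := Submodule.inclusion (show F ≤ sobolevLip hμ from hFW)
  obtain ⟨f, hf0, hf⟩ := exists_ne_zero_mem_orthogonal (toL2 hμ ∘ₗ ι) K (hF ▸ hK)
  have hne : toL2 hμ (ι f) ≠ 0 := (map_ne_zero_iff _ toL2_injective).2
    ((map_ne_zero_iff ι (Submodule.inclusion_injective _)).2 hf0)
  refine ⟨bddAbove_rayleighQuotients (hμ := hμ) hFW, f, f.2, ?_, ?_⟩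
  · exact (norm_toL2_sq (ι f)).symm.trans_ne (pow_ne_zero 2 (norm_ne_zero_iff.2 hne))
  · have hcf := h (ι f) hf
    rwa [norm_toL2_sq, norm_gradL2_sq] at hcf

end SobolevVariational

/-! ### Operators triangular with respect to a filtration -/

/-- The operator `D` is triangular with respect to the increasing filtration `Q` of subspaces
starting at `0`, acting on the graded piece `Q (N + 1) / Q N` as the scalar `a N`. -/
structure IsTriangular {R V : Type*} [CommRing R] [AddCommGroup V] [Module R V]
    (D : V →ₗ[R] V) (Q : ℕ → Submodule R V) (a : ℕ → R) : Prop where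
  zero_eq_bot : Q 0 = ⊥
  monotone : Monotone Q
  sub_smul_mem : ∀ N, ∀ p ∈ Q (N + 1), D p - a N • p ∈ Q N

namespace IsTriangular

lemma apply_mem {R V : Type*} [CommRing R] [AddCommGroup V] [Module R V] {D : V →ₗ[R] V}
    {Q : ℕ → Submodule R V} {a : ℕ → R} (hD : IsTriangular D Q a) {N : ℕ} {p : V}
    (hp : p ∈ Q N) : D p ∈ Q N := by
  cases N with
  | zero =>
    rw [hD.zero_eq_bot, Submodule.mem_bot] at hp ⊢
    rw [hp, map_zero]
  | succ N =>
    have hsum := add_mem (hD.monotone N.le_succ (hD.sub_smul_mem N p hp))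
      ((Q (N + 1)).smul_mem (a N) hp)
    rwa [sub_add_cancel] at hsum

variable {V H H' : Type*} [AddCommGroup V] [Module ℝ V] [NormedAddCommGroup H]
  [InnerProductSpace ℝ H] [NormedAddCommGroup H'] [InnerProductSpace ℝ H']
  {D : V →ₗ[ℝ] V} {Q : ℕ → Submodule ℝ V} [∀ N, FiniteDimensional ℝ (Q N)] {a : ℕ → ℝ}
  {J : V →ₗ[ℝ] H} {G : V →ₗ[ℝ] H'}

theorem exists_orthogonal_decomposition (hD : IsTriangular D Q a)
    (hJG : ∀ p q, ⟪J (D p), J q⟫_ℝ = ⟪G p, G q⟫_ℝ) {N : ℕ} {p : V} (hp : p ∈ Q (N + 1)) :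
    ∃ w, ∃ r ∈ Q N, p = w + r ∧ J w ∈ ((Q N).map J)ᗮ ∧
      ‖J p‖ ^ 2 = ‖J w‖ ^ 2 + ‖J r‖ ^ 2 ∧ ‖G p‖ ^ 2 = a N * ‖J w‖ ^ 2 + ‖G r‖ ^ 2 := by
  obtain ⟨r, hr, hJr⟩ := ((Q N).map J).starProjection_apply_mem (J p)
  have hw : J (p - r) ∈ ((Q N).map J)ᗮ := by
    rw [map_sub, hJr]
    exact Submodule.sub_starProjection_mem_orthogonal _
  have horth : ∀ s ∈ Q N, ⟪J s, J (p - r)⟫_ℝ = 0 := fun s hs =>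
    hw (J s) (Submodule.mem_map_of_mem hs)
  have hGw : ‖G (p - r)‖ ^ 2 = a N * ‖J (p - r)‖ ^ 2 := by
    have hmem := hD.sub_smul_mem N _ (sub_mem hp (hD.monotone N.le_succ hr))
    have hzero := horth _ hmem
    rw [map_sub, map_smul, inner_sub_left, real_inner_smul_left, sub_eq_zero, hJG] at hzero
    simpa only [real_inner_self_eq_norm_sq] using hzero
  have hGrw : ⟪G r, G (p - r)⟫_ℝ = 0 := by rw [← hJG, horth _ (hD.apply_mem hr)]
  refine ⟨p - r, r, hr, (sub_add_cancel p r).symm, hw, ?_, ?_⟩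
  · rw [← sub_add_cancel (J p) (J r), ← map_sub, norm_add_sq_real, real_inner_comm, horth r hr]
    ring
  · rw [← hGw, ← sub_add_cancel (G p) (G r), ← map_sub, norm_add_sq_real, real_inner_comm, hGrw]
    ring

theorem norm_sq_le_mul_norm_sq (hD : IsTriangular D Q a) (ha : Monotone a)
    (hJG : ∀ p q, ⟪J (D p), J q⟫_ℝ = ⟪G p, G q⟫_ℝ) {N : ℕ} {p : V} (hp : p ∈ Q (N + 1)) :
    ‖G p‖ ^ 2 ≤ a N * ‖J p‖ ^ 2 := by
  induction N generalizing p with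
  | zero =>
    obtain ⟨w, r, hr, rfl, -, -, hG⟩ := hD.exists_orthogonal_decomposition hJG hp
    obtain rfl : r = 0 := by simpa [hD.zero_eq_bot] using hr
    simpa using hG.le
  | succ N ih =>
    obtain ⟨w, r, hr, -, -, hJ, hG⟩ := hD.exists_orthogonal_decomposition hJG hp
    calc ‖G p‖ ^ 2 = a (N + 1) * ‖J w‖ ^ 2 + ‖G r‖ ^ 2 := hG
      _ ≤ a (N + 1) * ‖J w‖ ^ 2 + a N * ‖J r‖ ^ 2 := by gcongr; exact ih hr
      _ ≤ a (N + 1) * ‖J w‖ ^ 2 + a (N + 1) * ‖J r‖ ^ 2 := by gcongr; exact ha N.le_succ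
      _ = a (N + 1) * ‖J p‖ ^ 2 := by rw [hJ, mul_add]

theorem mul_norm_sq_le_norm_sq (hD : IsTriangular D Q a) (ha : Monotone a)
    (hJG : ∀ p q, ⟪J (D p), J q⟫_ℝ = ⟪G p, G q⟫_ℝ) {l N : ℕ} (hlN : l ≤ N) {p : V}
    (hp : p ∈ Q N) (hpl : J p ∈ ((Q l).map J)ᗮ) : a l * ‖J p‖ ^ 2 ≤ ‖G p‖ ^ 2 := by
  induction N, hlN using Nat.le_induction generalizing p with
  | base =>
    have hJp : J p = 0 := inner_self_eq_zero.1 (hpl _ (Submodule.mem_map_of_mem hp))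
    rw [hJp]
    simp
  | succ N hlN ih =>
    obtain ⟨w, r, hr, rfl, hw, hJ, hG⟩ := hD.exists_orthogonal_decomposition hJG hp
    have hwl : J w ∈ ((Q l).map J)ᗮ :=
      Submodule.orthogonal_le (Submodule.map_mono (hD.monotone hlN)) hw
    have hrl : J r ∈ ((Q l).map J)ᗮ := by simpa using sub_mem hpl hwl
    calc a l * ‖J (w + r)‖ ^ 2 = a l * ‖J w‖ ^ 2 + a l * ‖J r‖ ^ 2 := by rw [hJ, mul_add]
      _ ≤ a N * ‖J w‖ ^ 2 + ‖G r‖ ^ 2 := by gcongr; exacts [ha hlN, ih hr hrl]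
      _ = ‖G (w + r)‖ ^ 2 := hG.symm

theorem mul_norm_sq_starProjection_le (hD : IsTriangular D Q a) (ha : Monotone a)
    (hJG : ∀ p q, ⟪J (D p), J q⟫_ℝ = ⟪G p, G q⟫_ℝ) {u : H} {w : H'}
    (huw : ∀ p, ⟪J (D p), u⟫_ℝ = ⟪G p, w⟫_ℝ) {l N : ℕ} (hlN : l ≤ N)
    (hu : u ∈ ((Q l).map J)ᗮ) : a l * ‖((Q N).map J).starProjection u‖ ^ 2 ≤ ‖w‖ ^ 2 := by
  obtain ⟨q, hq, hJq⟩ := ((Q N).map J).starProjection_apply_mem u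
  have hproj : ∀ s ∈ Q N, ⟪J s, J q⟫_ℝ = ⟪J s, u⟫_ℝ := fun s hs => by
    rw [hJq, ← Submodule.inner_starProjection_left_eq_right,
      Submodule.starProjection_eq_self_iff.2 (Submodule.mem_map_of_mem hs)]
  have hql : J q ∈ ((Q l).map J)ᗮ := by
    rintro _ ⟨s, hs, rfl⟩
    rw [hproj s (hD.monotone hlN hs), hu (J s) (Submodule.mem_map_of_mem hs)]
  have hGq : ‖G q‖ * ‖G q‖ ≤ ‖G q‖ * ‖w‖ :=
    calc ‖G q‖ * ‖G q‖ = ⟪G q, w⟫_ℝ := by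
          rw [← real_inner_self_eq_norm_mul_norm, ← hJG, hproj _ (hD.apply_mem hq), huw]
      _ ≤ ‖G q‖ * ‖w‖ := real_inner_le_norm _ _
  have hGw : ‖G q‖ ≤ ‖w‖ := by
    rcases (norm_nonneg (G q)).eq_or_lt with h0 | hpos
    · exact h0 ▸ norm_nonneg w
    · exact le_of_mul_le_mul_left hGq hpos
  rw [← hJq]
  exact (hD.mul_norm_sq_le_norm_sq ha hJG hlN hq hql).trans
    (pow_le_pow_left₀ (norm_nonneg _) hGw 2)

theorem mul_norm_sq_le_norm_sq_of_dense (hD : IsTriangular D Q a) (ha : Monotone a)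
    (hJG : ∀ p q, ⟪J (D p), J q⟫_ℝ = ⟪G p, G q⟫_ℝ) (hQ : ⨆ N, Q N = ⊤)
    (hJ : J.range.topologicalClosure = ⊤) {u : H} {w : H'}
    (huw : ∀ p, ⟪J (D p), u⟫_ℝ = ⟪G p, w⟫_ℝ) {l : ℕ} (hu : u ∈ ((Q l).map J)ᗮ) :
    a l * ‖u‖ ^ 2 ≤ ‖w‖ ^ 2 := by
  have hdense : ⊤ ≤ (⨆ N, (Q N).map J).topologicalClosure := by
    rw [← Submodule.map_iSup, hQ, Submodule.map_top, hJ]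
  have hlim := Submodule.starProjection_tendsto_self (fun N => (Q N).map J)
    (fun _ _ hMN => Submodule.map_mono (hD.monotone hMN)) u hdense
  refine le_of_tendsto ((hlim.norm.pow 2).const_mul (a l)) ?_
  filter_upwards [eventually_ge_atTop l] with N hN
  exact hD.mul_norm_sq_starProjection_le ha hJG huw hN hu

end IsTriangular

/-! ### Polynomials filtered by degree -/

section Polynomial

open MvPolynomial

variable (σ R : Type*) [CommRing R]

/-- The submodule of polynomials of total degree `< N`. The strict inequality makes the filtration
start at `0`, the zero polynomial being the only one of degree `< 0`. -/
noncomputable def mvDegreeLT (N : ℕ) : Submodule R (MvPolynomial σ R) :=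
  restrictSupport R {s | s.degree < N}

lemma mvDegreeLT_zero : mvDegreeLT σ R 0 = ⊥ := by
  simp [mvDegreeLT, restrictSupport_eq_span]

lemma mvDegreeLT_mono : Monotone (mvDegreeLT σ R) := fun _ _ hMN =>
  restrictSupport_mono R fun _ hs => lt_of_lt_of_le hs hMN

lemma iSup_mvDegreeLT : ⨆ N, mvDegreeLT σ R N = ⊤ := by
  refine eq_top_iff.2 fun p _ => Submodule.mem_iSup_of_mem (p.support.sup Finsupp.degree + 1) ?_
  exact (mem_restrictSupport_iff R).2 fun s hs => Nat.lt_succ_of_le (Finset.le_sup hs)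

variable {σ R} in
lemma pderiv_monomial_mem_mvDegreeLT {s : σ →₀ ℕ} {N : ℕ} (hs : s.degree < N + 1) (c : R)
    (i : σ) : pderiv i (monomial s c) ∈ mvDegreeLT σ R N := by
  rw [pderiv_monomial]
  refine (monomial_mem_restrictSupport R).2 ?_
  rcases Nat.eq_zero_or_pos (s i) with hsi | hsi
  · exact .inr (by rw [hsi, Nat.cast_zero, mul_zero])
  · have hdeg : (s - Finsupp.single i 1).degree + 1 = s.degree := by
      conv_rhs => rw [← tsub_add_cancel_of_le (Finsupp.single_le_iff.2 hsi :
        Finsupp.single i 1 ≤ s), map_add, Finsupp.degree_single]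
    exact .inl (Nat.lt_of_succ_lt_succ (hdeg.trans_lt hs))

variable {σ R} in
lemma pderiv_mem_mvDegreeLT {p : MvPolynomial σ R} {N : ℕ} (hp : p ∈ mvDegreeLT σ R (N + 1))
    (i : σ) : pderiv i p ∈ mvDegreeLT σ R N := by
  suffices mvDegreeLT σ R (N + 1) ≤ (mvDegreeLT σ R N).comap (pderiv i).toLinearMap from this hp
  rw [mvDegreeLT, restrictSupport_eq_span, Submodule.span_le]
  rintro _ ⟨s, hs, rfl⟩
  exact pderiv_monomial_mem_mvDegreeLT hs 1 i

open Finset in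
lemma setOf_degree_lt_eq [Fintype σ] [DecidableEq σ] (N : ℕ) : {s : σ →₀ ℕ | s.degree < N} =
    ((range N).biUnion (univ : Finset σ).finsuppAntidiag : Finset (σ →₀ ℕ)) := by
  ext s
  simp [mem_finsuppAntidiag, Finsupp.degree_eq_sum]

instance finite_mvDegreeLT [Finite σ] (N : ℕ) : Module.Finite R (mvDegreeLT σ R N) := by
  classical
  have := Fintype.ofFinite σ
  have : Finite {s : σ →₀ ℕ | s.degree < N} := by
    rw [setOf_degree_lt_eq]
    exact Finset.finite_toSet _
  exact .of_basis (basisRestrictSupport R _)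

lemma sum_range_add_sub_one_choose (n l : ℕ) :
    ∑ d ∈ Finset.range (l + 1), (n + d - 1).choose d = (n + l).choose l := by
  induction l with
  | zero => simp
  | succ l ih =>
    rw [Finset.sum_range_succ, ih, ← add_assoc, Nat.add_sub_cancel, Nat.choose_succ_succ]

section Fintype

variable [Fintype σ]

theorem finrank_mvDegreeLT_succ [StrongRankCondition R] (l : ℕ) :
    Module.finrank R (mvDegreeLT σ R (l + 1)) = (Fintype.card σ + l).choose l := by
  classical
  have hdisj : (Finset.range (l + 1) : Set ℕ).PairwiseDisjoint
      (Finset.univ : Finset σ).finsuppAntidiag := fun a _ b _ hab =>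
    Finset.disjoint_left.2 fun s hsa hsb => hab <|
      (Finset.mem_finsuppAntidiag.1 hsa).1.symm.trans (Finset.mem_finsuppAntidiag.1 hsb).1
  rw [mvDegreeLT, Module.finrank_eq_nat_card_basis (basisRestrictSupport R _),
    Nat.card_coe_set_eq, setOf_degree_lt_eq, Set.ncard_coe_finset, Finset.card_biUnion hdisj]
  simp only [Finset.card_finsuppAntidiag_nat_eq_choose, Finset.card_univ,
    sum_range_add_sub_one_choose]

/-- The Ornstein–Uhlenbeck operator `p ↦ ∑ i, (xᵢ ∂ᵢ p - ∂ᵢ² p)`, with the sign making it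
nonnegative. -/
noncomputable def ornsteinUhlenbeck : MvPolynomial σ R →ₗ[R] MvPolynomial σ R :=
  ∑ i, (LinearMap.mulLeft R (X i) - (pderiv i).toLinearMap) ∘ₗ (pderiv i).toLinearMap

variable {σ R}

lemma ornsteinUhlenbeck_apply (p : MvPolynomial σ R) :
    ornsteinUhlenbeck σ R p = ∑ i, (X i * pderiv i p - pderiv i (pderiv i p)) := by
  simp [ornsteinUhlenbeck]

lemma ornsteinUhlenbeck_monomial (s : σ →₀ ℕ) (c : R) :
    ornsteinUhlenbeck σ R (monomial s c) =
      (s.degree : R) • monomial s c - ∑ i, pderiv i (pderiv i (monomial s c)) := by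
  rw [ornsteinUhlenbeck_apply, Finset.sum_sub_distrib]
  simp only [X_mul_pderiv_monomial]
  rw [← Finset.sum_smul, ← Finsupp.degree_eq_sum, Nat.cast_smul_eq_nsmul]

theorem isTriangular_ornsteinUhlenbeck :
    IsTriangular (ornsteinUhlenbeck σ R) (mvDegreeLT σ R) (fun N => (N : R)) where
  zero_eq_bot := mvDegreeLT_zero σ R
  monotone := mvDegreeLT_mono σ R
  sub_smul_mem N p hp := by
    let T := ornsteinUhlenbeck σ R - (N : R) • LinearMap.id
    suffices mvDegreeLT σ R (N + 1) ≤ (mvDegreeLT σ R N).comap T from this hp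
    rw [mvDegreeLT, restrictSupport_eq_span, Submodule.span_le]
    rintro _ ⟨s, hs, rfl⟩
    have hT : T (monomial s 1) = ((s.degree : R) - N) • monomial s 1 -
        ∑ i, pderiv i (pderiv i (monomial s 1)) := by
      simp only [T, LinearMap.sub_apply, ornsteinUhlenbeck_monomial, sub_smul]
      exact sub_right_comm _ _ _
    rw [SetLike.mem_coe, Submodule.mem_comap, hT]
    have hpderiv : ∀ i, pderiv i (monomial s (1 : R)) ∈ mvDegreeLT σ R (N + 1) := fun i =>
      mvDegreeLT_mono σ R N.le_succ (pderiv_monomial_mem_mvDegreeLT hs 1 i)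
    refine sub_mem ?_ (sum_mem fun i _ => pderiv_mem_mvDegreeLT (hpderiv i) i)
    rcases Nat.lt_succ_iff_lt_or_eq.1 hs with hlt | heq
    · exact Submodule.smul_mem _ _ ((monomial_mem_restrictSupport R).2 (.inl hlt))
    · simp [heq]

end Fintype

end Polynomial

/-! ### Density of polynomials -/

section Fourier

open Complex in
lemma hasSum_integral_cexp_mul_I_mul {α : Type*} [MeasurableSpace α] {μ : Measure α}
    {φ u : α → ℝ} (hφ : AEStronglyMeasurable φ μ) (hu : AEStronglyMeasurable u μ)
    (hInt : Integrable (fun x => Real.exp |φ x| * |u x|) μ) :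
    HasSum (fun k : ℕ => I ^ k / (k.factorial : ℂ) * ((∫ x, φ x ^ k * u x ∂μ : ℝ) : ℂ))
      (∫ x, cexp (φ x * I) * u x ∂μ) := by
  have hterm : ∀ k : ℕ, I ^ k / (k.factorial : ℂ) * ((∫ x, φ x ^ k * u x ∂μ : ℝ) : ℂ) =
      ∫ x, (φ x * I) ^ k / k.factorial * u x ∂μ := fun k => by
    rw [← integral_complex_ofReal, ← integral_const_mul]
    refine integral_congr_ae (ae_of_all _ fun x => ?_)
    push_cast
    ring
  have hexp_tsum : ∀ x, ∑' k : ℕ, |φ x| ^ k / k.factorial * |u x| = Real.exp |φ x| * |u x| :=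
    fun x => by rw [tsum_mul_right, Real.exp_eq_exp_ℝ, NormedSpace.exp_eq_tsum_div]
  have hφ' := Complex.continuous_ofReal.comp_aestronglyMeasurable hφ
  have hu' := Complex.continuous_ofReal.comp_aestronglyMeasurable hu
  simp only [hterm]
  refine hasSum_integral_of_dominated_convergence
    (fun k x => |φ x| ^ k / k.factorial * |u x|) (fun k => ?_) (fun k => ?_) ?_ ?_ ?_
  · exact (((hφ'.mul_const I).pow k).mul_const _).mul hu'
  · exact ae_of_all _ fun x => by simp
  · exact ae_of_all _ fun x => (Real.summable_pow_div_factorial _).mul_right _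
  · simpa only [hexp_tsum] using hInt
  · refine ae_of_all _ fun x => ?_
    have hsum := NormedSpace.expSeries_div_hasSum_exp (φ x * I)
    rw [← exp_eq_exp_ℂ] at hsum
    exact hsum.mul_right _

variable {E : Type*} [NormedAddCommGroup E] [InnerProductSpace ℝ E] [MeasurableSpace E]
  {μ : Measure E} {u : E → ℝ}

open Complex in
lemma charFun_withDensity_ofReal (hu : AEMeasurable u μ) (t : E) :
    charFun (μ.withDensity fun x => ENNReal.ofReal (u x)) t =
      ∫ x, cexp (⟪x, t⟫_ℝ * I) * ((max (u x) 0 : ℝ) : ℂ) ∂μ := by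
  rw [charFun_apply, integral_withDensity_eq_integral_toReal_smul₀ hu.ennreal_ofReal (by simp)]
  refine integral_congr_ae (ae_of_all _ fun x => ?_)
  simp only [ENNReal.toReal_ofReal', real_smul, mul_comm]

variable [BorelSpace E]

open Complex in
lemma integrable_cexp_inner_mul_I_mul (hu : Integrable u μ) (t : E) :
    Integrable (fun x => cexp (⟪x, t⟫_ℝ * I) * (u x : ℂ)) μ :=
  hu.ofReal.bdd_mul (c := 1) (Continuous.aestronglyMeasurable (by fun_prop))
    (ae_of_all _ fun _ => (norm_exp_ofReal_mul_I _).le)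

open Complex in
theorem ae_eq_zero_of_forall_integral_cexp_eq_zero [CompleteSpace E]
    [SecondCountableTopology E] (hu : Integrable u μ)
    (h : ∀ t, ∫ x, cexp (⟪x, t⟫_ℝ * I) * u x ∂μ = 0) : u =ᵐ[μ] 0 := by
  have := isFiniteMeasure_withDensity_ofReal hu.2
  have := isFiniteMeasure_withDensity_ofReal hu.neg.2
  have hparts : μ.withDensity (fun x => ENNReal.ofReal (u x)) =
      μ.withDensity (fun x => ENNReal.ofReal ((-u) x)) := by
    refine Measure.ext_of_charFun (funext fun t => ?_)
    rw [charFun_withDensity_ofReal hu.aemeasurable, charFun_withDensity_ofReal hu.aemeasurable.neg,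
      ← sub_eq_zero, ← integral_sub (integrable_cexp_inner_mul_I_mul hu.pos_part t)
        (integrable_cexp_inner_mul_I_mul hu.neg.pos_part t), ← h t]
    refine integral_congr_ae (ae_of_all _ fun x => ?_)
    simp only [Pi.neg_apply, ← mul_sub, ← Complex.ofReal_sub, max_zero_sub_max_neg_zero_eq_self]
  have hae := (withDensity_eq_iff hu.aemeasurable.ennreal_ofReal
    hu.aemeasurable.neg.ennreal_ofReal hu.lintegral_lt_top.ne).1 hparts
  filter_upwards [hae] with x hx
  rw [Pi.neg_apply] at hx
  rcases le_total (u x) 0 with hneg | hpos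
  · rw [ENNReal.ofReal_of_nonpos hneg, eq_comm, ENNReal.ofReal_eq_zero] at hx
    exact le_antisymm hneg (neg_nonpos.1 hx)
  · rw [ENNReal.ofReal_of_nonpos (neg_nonpos.2 hpos), ENNReal.ofReal_eq_zero] at hx
    exact le_antisymm hx hpos

end Fourier

section ExpMoments

/-- All exponential moments of the norm are finite: polynomials are then square integrable, and
dense in `L²`. -/
def HasExpMoments {E : Type*} [Norm E] [MeasurableSpace E] (μ : Measure E) : Prop :=
  ∀ a : ℝ, Integrable (fun x => Real.exp (a * ‖x‖)) μ

namespace HasExpMoments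

lemma isFiniteMeasure {E : Type*} [Norm E] [MeasurableSpace E] {μ : Measure E}
    (hμ : HasExpMoments μ) : IsFiniteMeasure μ := by
  simpa [integrable_const_iff] using hμ 0

lemma memLp_exp {E : Type*} [NormedAddCommGroup E] [MeasurableSpace E] [OpensMeasurableSpace E]
    {μ : Measure E} (hμ : HasExpMoments μ) (a : ℝ) :
    MemLp (fun x => Real.exp (a * ‖x‖)) 2 μ := by
  rw [memLp_two_iff_integrable_sq (by fun_prop)]
  simpa only [← Real.exp_nat_mul, Nat.cast_ofNat, ← mul_assoc] using hμ (2 * a)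

end HasExpMoments

end ExpMoments

section PolyFun

variable {ι : Type*}

open MvPolynomial

/-- The polynomial function on Euclidean space defined by a polynomial, as an algebra
homomorphism. -/
noncomputable def polyFun : MvPolynomial ι ℝ →ₐ[ℝ] (EuclideanSpace ℝ ι → ℝ) :=
  aeval fun i x => x i

lemma polyFun_apply (p : MvPolynomial ι ℝ) (x : EuclideanSpace ℝ ι) :
    polyFun p x = eval x.ofLp p := by
  have hcomp : (Pi.evalAlgHom ℝ (fun _ => ℝ) x).comp polyFun = aeval x.ofLp :=
    algHom_ext fun i => by simp [polyFun]
  exact AlgHom.congr_fun hcomp p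

lemma polyFun_C (r : ℝ) : polyFun (C r : MvPolynomial ι ℝ) = fun _ => r := by
  ext x
  rw [polyFun_apply, eval_C]

lemma polyFun_X (i : ι) : polyFun (X i) = fun x : EuclideanSpace ℝ ι => x i :=
  aeval_X _ i

lemma polyFun_injective : Function.Injective (polyFun (ι := ι)) := fun p q hpq =>
  MvPolynomial.funext fun x => by
    simpa only [polyFun_apply] using congrFun hpq (WithLp.toLp 2 x)

lemma exists_abs_polyFun_le_mul_exp [Fintype ι] (p : MvPolynomial ι ℝ) :
    ∃ C ≥ 0, ∃ a ≥ 0, ∀ x, |polyFun p x| ≤ C * Real.exp (a * ‖x‖) := by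
  induction p using MvPolynomial.induction_on with
  | C r => exact ⟨|r|, abs_nonneg r, 0, le_rfl, fun x => by simp⟩
  | add p q hp hq =>
    obtain ⟨C, hC, a, ha, hp⟩ := hp
    obtain ⟨C', hC', a', ha', hq⟩ := hq
    refine ⟨C + C', add_nonneg hC hC', a + a', add_nonneg ha ha', fun x => ?_⟩
    calc |polyFun (p + q) x| ≤ |polyFun p x| + |polyFun q x| := by
          rw [map_add]
          exact abs_add_le _ _
      _ ≤ C * Real.exp (a * ‖x‖) + C' * Real.exp (a' * ‖x‖) := add_le_add (hp x) (hq x)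
      _ ≤ C * Real.exp ((a + a') * ‖x‖) + C' * Real.exp ((a + a') * ‖x‖) := by
          gcongr <;> linarith
      _ = (C + C') * Real.exp ((a + a') * ‖x‖) := (add_mul _ _ _).symm
  | mul_X p i hp =>
    obtain ⟨C, hC, a, ha, hp⟩ := hp
    refine ⟨C, hC, a + 1, by positivity, fun x => ?_⟩
    have hxi : |x i| ≤ Real.exp ‖x‖ :=
      calc |x i| ≤ ‖x‖ := PiLp.norm_apply_le x i
        _ ≤ ‖x‖ + 1 := by linarith
        _ ≤ Real.exp ‖x‖ := Real.add_one_le_exp _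
    calc |polyFun (p * X i) x| = |polyFun p x| * |x i| := by
          rw [map_mul, polyFun_X, Pi.mul_apply, abs_mul]
      _ ≤ C * Real.exp (a * ‖x‖) * Real.exp ‖x‖ := by gcongr; exact hp x
      _ = C * Real.exp ((a + 1) * ‖x‖) := by
          rw [mul_assoc, ← Real.exp_add, add_mul, one_mul]

lemma contDiff_polyFun [Fintype ι] (p : MvPolynomial ι ℝ) {k : WithTop ℕ∞} :
    ContDiff ℝ k (polyFun p) := by
  induction p using MvPolynomial.induction_on with
  | C r => rw [polyFun_C]; exact contDiff_const
  | add p q hp hq => rw [map_add]; exact hp.add hq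
  | mul_X p i hp => rw [map_mul, polyFun_X]; exact hp.mul (by fun_prop)

lemma fderiv_polyFun_single [Finite ι] [DecidableEq ι] (p : MvPolynomial ι ℝ)
    (x : EuclideanSpace ℝ ι) (i : ι) :
    fderiv ℝ (polyFun p) x (EuclideanSpace.single i 1) = polyFun (pderiv i p) x := by
  cases nonempty_fintype ι
  have hdiff : ∀ q : MvPolynomial ι ℝ, DifferentiableAt ℝ (polyFun q) x := fun q =>
    (contDiff_polyFun q (k := 1)).differentiable one_ne_zero x
  induction p using MvPolynomial.induction_on with
  | C r => rw [polyFun_C]; simp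
  | add p q hp hq =>
    rw [map_add, fderiv_add (hdiff p) (hdiff q), add_apply, hp, hq,
      map_add, map_add, Pi.add_apply]
  | mul_X p j hp =>
    have hX : fderiv ℝ (polyFun (X j : MvPolynomial ι ℝ)) x (EuclideanSpace.single i 1) =
        polyFun (pderiv i (X j)) x := by
      have hproj : fderiv ℝ (fun y : EuclideanSpace ℝ ι => y j) x = EuclideanSpace.proj j :=
        (EuclideanSpace.proj j : EuclideanSpace ℝ ι →L[ℝ] ℝ).fderiv
      rw [polyFun_X, hproj, pderiv_X]
      rcases eq_or_ne i j with rfl | hij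
      · simp
      · simp [hij.symm]
    rw [map_mul, fderiv_mul (hdiff p) (hdiff _), pderiv_mul]
    simp only [add_apply, smul_apply, hX, pderiv_X, smul_eq_mul, hp, map_add, map_mul, Pi.add_apply,
      Pi.mul_apply]
    ring

variable [Fintype ι]

lemma gradient_apply [DecidableEq ι] (f : EuclideanSpace ℝ ι → ℝ) (x : EuclideanSpace ℝ ι)
    (i : ι) : ∇ f x i = fderiv ℝ f x (EuclideanSpace.single i 1) := by
  rw [← toDual_gradient, InnerProductSpace.toDual_apply_apply, EuclideanSpace.inner_single_right]
  simp

variable {μ : Measure (EuclideanSpace ℝ ι)}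

lemma memLp_polyFun (hexp : HasExpMoments μ) (p : MvPolynomial ι ℝ) : MemLp (polyFun p) 2 μ := by
  obtain ⟨C, -, a, -, hp⟩ := exists_abs_polyFun_le_mul_exp p
  exact ((hexp.memLp_exp a).const_mul C).mono'
    (contDiff_polyFun p (k := 0)).continuous.aestronglyMeasurable (ae_of_all _ hp)

theorem memW12Lip_polyFun (hμ : μ ≪ volume) (hexp : HasExpMoments μ) (p : MvPolynomial ι ℝ) :
    memW12Lip μ (polyFun p) := by
  classical
  refine (memW12Lip_iff hμ).2
    ⟨(contDiff_polyFun p).locallyLipschitz, memLp_polyFun hexp p, .of_eval_piLp fun i => ?_⟩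
  simpa only [gradient_apply, fderiv_polyFun_single] using memLp_polyFun hexp (pderiv i p)

/-- Polynomials as elements of the metric Sobolev space of a measure with exponential moments. -/
noncomputable def polySobolev (hμ : μ ≪ volume) (hexp : HasExpMoments μ) :
    MvPolynomial ι ℝ →ₗ[ℝ] sobolevLip hμ :=
  polyFun.toLinearMap.codRestrict (sobolevLip hμ) (memW12Lip_polyFun hμ hexp)

lemma exists_polyFun_eq_inner (t : EuclideanSpace ℝ ι) :
    ∃ p : MvPolynomial ι ℝ, polyFun p = fun x => ⟪x, t⟫_ℝ := by
  refine ⟨∑ i, t i • X i, funext fun x => ?_⟩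
  simp [polyFun_X, PiLp.inner_apply]

theorem ae_eq_zero_of_forall_integral_polyFun_mul_eq_zero (hexp : HasExpMoments μ)
    {u : EuclideanSpace ℝ ι → ℝ} (hu : MemLp u 2 μ)
    (h : ∀ p : MvPolynomial ι ℝ, ∫ x, polyFun p x * u x ∂μ = 0) : u =ᵐ[μ] 0 := by
  have := hexp.isFiniteMeasure
  refine ae_eq_zero_of_forall_integral_cexp_eq_zero (hu.integrable one_le_two) fun t => ?_
  obtain ⟨p, hp⟩ := exists_polyFun_eq_inner t
  have hInt : Integrable (fun x => Real.exp |⟪x, t⟫_ℝ| * |u x|) μ := by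
    refine ((hexp.memLp_exp ‖t‖).integrable_mul hu.abs).mono'
      ((Continuous.aestronglyMeasurable (by fun_prop)).mul hu.abs.1) (ae_of_all _ fun x => ?_)
    rw [Real.norm_of_nonneg (by positivity)]
    refine mul_le_mul_of_nonneg_right (Real.exp_le_exp.2 ?_) (abs_nonneg _)
    exact (abs_real_inner_le_norm x t).trans_eq (mul_comm _ _)
  have hmoment : ∀ k : ℕ, ∫ x, ⟪x, t⟫_ℝ ^ k * u x ∂μ = 0 := fun k => by
    simpa only [map_pow, hp, Pi.pow_apply] using h (p ^ k)
  have hsum := hasSum_integral_cexp_mul_I_mul (Continuous.aestronglyMeasurable (by fun_prop))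
    hu.1 hInt
  simp only [hmoment, Complex.ofReal_zero, mul_zero] at hsum
  exact hsum.unique hasSum_zero

theorem topologicalClosure_range_toL2_comp_polySobolev (hμ : μ ≪ volume) (hexp : HasExpMoments μ) :
    (sobolevLip.toL2 hμ ∘ₗ polySobolev hμ hexp).range.topologicalClosure = ⊤ := by
  rw [Submodule.topologicalClosure_eq_top_iff, Submodule.eq_bot_iff]
  refine fun u hu => (Lp.eq_zero_iff_ae_eq_zero).2 ?_
  refine ae_eq_zero_of_forall_integral_polyFun_mul_eq_zero hexp (Lp.memLp u) fun p => ?_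
  have horth := (Submodule.mem_orthogonal _ _).1 hu _ ⟨p, rfl⟩
  have hinner := inner_toLp_toLp (memLp_polyFun hexp p) (Lp.memLp u)
  rw [Lp.toLp_coeFn] at hinner
  simpa [mul_comm] using hinner.symm.trans horth

end PolyFun

/-! ### The Gaussian measure -/

section GaussianWeight

variable {E : Type*} [NormedAddCommGroup E]

/-- The unnormalised standard Gaussian density. -/
noncomputable def gaussianWeight (x : E) : ℝ := Real.exp (-‖x‖ ^ 2 / 2)

lemma gaussianWeight_pos (x : E) : 0 < gaussianWeight x := Real.exp_pos _

lemma continuous_gaussianWeight : Continuous (gaussianWeight (E := E)) := by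
  unfold gaussianWeight
  fun_prop

variable [InnerProductSpace ℝ E]

lemma contDiff_gaussianWeight {k : WithTop ℕ∞} : ContDiff ℝ k (gaussianWeight (E := E)) :=
  ((contDiff_norm_sq ℝ).neg.div_const 2).exp

lemma fderiv_gaussianWeight (x v : E) :
    fderiv ℝ gaussianWeight x v = -(⟪x, v⟫_ℝ * gaussianWeight x) := by
  have hsq := (hasStrictFDerivAt_norm_sq x).hasFDerivAt.const_mul (-1 / 2 : ℝ)
  have hexponent : HasFDerivAt (fun y : E => -‖y‖ ^ 2 / 2) (-innerSL ℝ x) x :=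
    (hsq.congr_fderiv (by ext y; simp [← mul_assoc])).congr_of_eventuallyEq
      (.of_forall fun y => by ring)
  rw [show gaussianWeight = fun y : E => Real.exp (-‖y‖ ^ 2 / 2) from rfl, hexponent.exp.fderiv]
  simp [mul_comm]

variable [FiniteDimensional ℝ E] [MeasurableSpace E] [BorelSpace E]

lemma integrable_exp_mul_norm_mul_gaussianWeight (a : ℝ) :
    Integrable (fun x : E => Real.exp (a * ‖x‖) * gaussianWeight x) := by
  have hquarter : Integrable (fun x : E => Real.exp (-(1 / 4) * ‖x‖ ^ 2)) := by
    have hcexp := (GaussianFourier.integrable_cexp_neg_mul_sq_norm_add (V := E) (b := 1 / 4)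
      (by norm_num) 0 0).norm
    refine hcexp.congr (ae_of_all _ fun x => ?_)
    have hcast : (-(1 / 4) : ℂ) * ‖x‖ ^ 2 = ((-(1 / 4) * ‖x‖ ^ 2 : ℝ) : ℂ) := by push_cast; ring
    simp only [zero_mul, add_zero, hcast, Complex.norm_exp, Complex.ofReal_re]
  refine (hquarter.const_mul (Real.exp (a ^ 2))).mono'
    (by unfold gaussianWeight; fun_prop) (ae_of_all _ fun x => ?_)
  rw [gaussianWeight, ← Real.exp_add, ← Real.exp_add, Real.norm_of_nonneg (Real.exp_pos _).le,
    Real.exp_le_exp]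
  linarith [sq_nonneg (a - ‖x‖ / 2)]

end GaussianWeight

section StdGaussian

variable {n : ℕ}

local notation "ℝⁿ" => EuclideanSpace ℝ (Fin n)

variable (n) in
/-- The total mass of the Gaussian weight. -/
noncomputable def gaussianMass : ℝ≥0∞ :=
  (volume.withDensity fun x : ℝⁿ => ENNReal.ofReal (gaussianWeight x)) Set.univ

lemma stdGaussian_eq_smul_withDensity : stdGaussian n =
    (gaussianMass n)⁻¹ • volume.withDensity fun x : ℝⁿ => ENNReal.ofReal (gaussianWeight x) := rfl

lemma volume_absolutelyContinuous_withDensity_gaussianWeight :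
    (volume : Measure ℝⁿ) ≪ volume.withDensity fun x => ENNReal.ofReal (gaussianWeight x) :=
  withDensity_absolutelyContinuous' continuous_gaussianWeight.measurable.ennreal_ofReal.aemeasurable
    (ae_of_all _ fun x => (ENNReal.ofReal_pos.2 (gaussianWeight_pos x)).ne')

lemma gaussianMass_ne_zero : gaussianMass n ≠ 0 := fun h =>
  isOpen_univ.measure_ne_zero volume Set.univ_nonempty
    (volume_absolutelyContinuous_withDensity_gaussianWeight h)

lemma gaussianMass_ne_top : gaussianMass n ≠ ⊤ := by
  have hInt : Integrable (gaussianWeight (E := ℝⁿ)) := by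
    simpa using integrable_exp_mul_norm_mul_gaussianWeight (E := ℝⁿ) 0
  rw [gaussianMass, withDensity_apply _ MeasurableSet.univ, Measure.restrict_univ]
  exact hInt.lintegral_lt_top.ne

lemma stdGaussian_absolutelyContinuous : stdGaussian n ≪ volume :=
  (withDensity_absolutelyContinuous _ _).smul_left _

instance isOpenPosMeasure_stdGaussian : (stdGaussian n).IsOpenPosMeasure :=
  (volume_absolutelyContinuous_withDensity_gaussianWeight.trans <|
    Measure.absolutelyContinuous_smul (ENNReal.inv_ne_zero.2 gaussianMass_ne_top)).isOpenPosMeasure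

lemma integral_stdGaussian (f : ℝⁿ → ℝ) :
    ∫ x, f x ∂(stdGaussian n) = (gaussianMass n)⁻¹.toReal * ∫ x, f x * gaussianWeight x := by
  rw [stdGaussian_eq_smul_withDensity, integral_smul_measure, smul_eq_mul,
    integral_withDensity_eq_integral_toReal_smul
      continuous_gaussianWeight.measurable.ennreal_ofReal (by simp)]
  simp only [ENNReal.toReal_ofReal (gaussianWeight_pos _).le, smul_eq_mul, mul_comm]

lemma integrable_stdGaussian_iff (f : ℝⁿ → ℝ) :
    Integrable f (stdGaussian n) ↔ Integrable (fun x => f x * gaussianWeight x) := by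
  rw [stdGaussian_eq_smul_withDensity, integrable_smul_measure
      (ENNReal.inv_ne_zero.2 gaussianMass_ne_top) (ENNReal.inv_ne_top.2 gaussianMass_ne_zero),
    integrable_withDensity_iff_integrable_smul'
      continuous_gaussianWeight.measurable.ennreal_ofReal (by simp)]
  simp only [ENNReal.toReal_ofReal (gaussianWeight_pos _).le, smul_eq_mul, mul_comm]

theorem hasExpMoments_stdGaussian : HasExpMoments (stdGaussian n) := fun a =>
  (integrable_stdGaussian_iff _).2 (integrable_exp_mul_norm_mul_gaussianWeight a)

/-! ### Stein's lemma -/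

lemma locallyLipschitz_mul {E : Type*} [PseudoEMetricSpace E] {f g : E → ℝ}
    (hf : LocallyLipschitz f) (hg : LocallyLipschitz g) : LocallyLipschitz (f * g) :=
  (contDiff_mul (𝕜 := ℝ) (𝔸 := ℝ) (n := 1)).locallyLipschitz.comp (hf.prodMk hg)

theorem integral_fderiv_stdGaussian {f : ℝⁿ → ℝ} (hf : LocallyLipschitz f) {v : ℝⁿ}
    (hfi : Integrable f (stdGaussian n))
    (hf'i : Integrable (fun x => fderiv ℝ f x v) (stdGaussian n))
    (hxfi : Integrable (fun x => ⟪x, v⟫_ℝ * f x) (stdGaussian n)) :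
    ∫ x, fderiv ℝ f x v ∂(stdGaussian n) = ∫ x, ⟪x, v⟫_ℝ * f x ∂(stdGaussian n) := by
  have hfderiv : (fun x => fderiv ℝ (f * gaussianWeight) x v) =ᵐ[volume]
      fun x => (fderiv ℝ f x v - ⟪x, v⟫_ℝ * f x) * gaussianWeight x := by
    filter_upwards [ae_differentiableAt_of_locallyLipschitz hf] with x hx
    rw [fderiv_mul hx (contDiff_gaussianWeight.differentiable one_ne_zero x)]
    simp only [add_apply, smul_apply, smul_eq_mul, fderiv_gaussianWeight]
    ring
  have hzero := integral_fderiv_eq_zero (μ := volume) (v := v)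
    (locallyLipschitz_mul hf (contDiff_gaussianWeight (k := 1)).locallyLipschitz)
    ((integrable_stdGaussian_iff f).1 hfi)
    (((integrable_stdGaussian_iff _).1 (hf'i.sub hxfi)).congr hfderiv.symm)
  rw [← sub_eq_zero, ← integral_sub hf'i hxfi, integral_stdGaussian, ← integral_congr_ae hfderiv,
    hzero, mul_zero]

open MvPolynomial sobolevLip

lemma integrable_polyFun_mul (p : MvPolynomial (Fin n) ℝ) {g : ℝⁿ → ℝ}
    (hg : MemLp g 2 (stdGaussian n)) :
    Integrable (fun x => polyFun p x * g x) (stdGaussian n) :=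
  (memLp_polyFun hasExpMoments_stdGaussian p).integrable_mul hg

lemma integral_polyFun_mul_gradient_stdGaussian
    (p : MvPolynomial (Fin n) ℝ) (f : sobolevLip (stdGaussian_absolutelyContinuous (n := n)))
    (i : Fin n) :
    ∫ x, polyFun p x * ∇ f.1 x i ∂(stdGaussian n) =
      ∫ x, polyFun (X i * p - pderiv i p) x * f.1 x ∂(stdGaussian n) := by
  have hpf : Integrable (fun x => polyFun (pderiv i p) x * f.1 x) (stdGaussian n) :=
    integrable_polyFun_mul _ (memLp f)
  have hpf' : Integrable (fun x => polyFun p x * ∇ f.1 x i) (stdGaussian n) :=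
    integrable_polyFun_mul _ ((memLp_gradient f).eval_piLp i)
  have hxpf : Integrable (fun x => polyFun (X i * p) x * f.1 x) (stdGaussian n) :=
    integrable_polyFun_mul _ (memLp f)
  have hfderiv : (fun x => fderiv ℝ (polyFun p * f.1) x (EuclideanSpace.single i 1))
      =ᵐ[stdGaussian n] fun x => polyFun p x * ∇ f.1 x i + polyFun (pderiv i p) x * f.1 x := by
    filter_upwards [stdGaussian_absolutelyContinuous.ae_le
      (ae_differentiableAt_of_locallyLipschitz (locallyLipschitz f))] with x hx
    rw [fderiv_mul ((contDiff_polyFun p).differentiable one_ne_zero x) hx]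
    simp only [add_apply, smul_apply, smul_eq_mul, gradient_apply, fderiv_polyFun_single]
    ring
  have hinner : ∀ x : ℝⁿ, ⟪x, EuclideanSpace.single i 1⟫_ℝ * (polyFun p * f.1) x =
      polyFun (X i * p) x * f.1 x := fun x => by
    simp [EuclideanSpace.inner_single_right, polyFun_X, mul_assoc]
  have hstein := integral_fderiv_stdGaussian (v := EuclideanSpace.single i 1)
    (locallyLipschitz_mul (contDiff_polyFun p).locallyLipschitz (locallyLipschitz f))
    (integrable_polyFun_mul p (memLp f)) ((hpf'.add hpf).congr hfderiv.symm)
    (by simpa only [hinner] using hxpf)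
  simp only [hinner] at hstein
  rw [integral_congr_ae hfderiv, integral_add hpf' hpf] at hstein
  simp only [map_sub, Pi.sub_apply, sub_mul]
  rw [integral_sub hxpf hpf, ← hstein, add_sub_cancel_right]

theorem integral_polyFun_ornsteinUhlenbeck_mul (p : MvPolynomial (Fin n) ℝ)
    (f : sobolevLip (stdGaussian_absolutelyContinuous (n := n))) :
    ∫ x, polyFun (ornsteinUhlenbeck (Fin n) ℝ p) x * f.1 x ∂(stdGaussian n) =
      ∫ x, ⟪∇ (polyFun p) x, ∇ f.1 x⟫_ℝ ∂(stdGaussian n) := by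
  have hgrad : ∀ x, ⟪∇ (polyFun p) x, ∇ f.1 x⟫_ℝ =
      ∑ i, polyFun (pderiv i p) x * ∇ f.1 x i := fun x => by
    simp only [PiLp.inner_apply, gradient_apply, fderiv_polyFun_single, RCLike.inner_apply,
      conj_trivial, mul_comm]
  calc ∫ x, polyFun (ornsteinUhlenbeck (Fin n) ℝ p) x * f.1 x ∂(stdGaussian n)
    _ = ∑ i, ∫ x, polyFun (X i * pderiv i p - pderiv i (pderiv i p)) x * f.1 x
          ∂(stdGaussian n) := by
        rw [← integral_finsetSum _ fun i _ => integrable_polyFun_mul _ (memLp f)]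
        simp only [ornsteinUhlenbeck_apply, map_sum, Finset.sum_apply, Finset.sum_mul]
    _ = ∑ i, ∫ x, polyFun (pderiv i p) x * ∇ f.1 x i ∂(stdGaussian n) := by
        simp only [integral_polyFun_mul_gradient_stdGaussian]
    _ = ∫ x, ⟪∇ (polyFun p) x, ∇ f.1 x⟫_ℝ ∂(stdGaussian n) := by
        simp only [hgrad]
        rw [integral_finsetSum _ fun i _ =>
          integrable_polyFun_mul _ ((memLp_gradient f).eval_piLp i)]

variable (n) in
/-- Polynomials as elements of the metric Sobolev space of Gaussian space. -/
noncomputable abbrev gaussianPoly :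
    MvPolynomial (Fin n) ℝ →ₗ[ℝ] sobolevLip (stdGaussian_absolutelyContinuous (n := n)) :=
  polySobolev stdGaussian_absolutelyContinuous hasExpMoments_stdGaussian

theorem inner_toL2_ornsteinUhlenbeck (p : MvPolynomial (Fin n) ℝ)
    (f : sobolevLip (stdGaussian_absolutelyContinuous (n := n))) :
    ⟪toL2 _ (gaussianPoly n (ornsteinUhlenbeck (Fin n) ℝ p)), toL2 _ f⟫_ℝ =
      ⟪gradL2 _ (gaussianPoly n p), gradL2 _ f⟫_ℝ := by
  rw [inner_toL2, inner_gradL2]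
  exact integral_polyFun_ornsteinUhlenbeck_mul p f

end StdGaussian

/-! ### The spectrum of Gaussian space -/

section GaussianSpectrum

open sobolevLip

variable {n k l : ℕ}

theorem norm_gradL2_gaussianPoly_sq_le {p : MvPolynomial (Fin n) ℝ}
    (hp : p ∈ mvDegreeLT (Fin n) ℝ (l + 1)) :
    ‖gradL2 _ (gaussianPoly n p)‖ ^ 2 ≤ l * ‖toL2 _ (gaussianPoly n p)‖ ^ 2 :=
  isTriangular_ornsteinUhlenbeck.norm_sq_le_mul_norm_sq (J := toL2 _ ∘ₗ gaussianPoly n)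
    (G := gradL2 _ ∘ₗ gaussianPoly n) Nat.mono_cast
    (fun p q => inner_toL2_ornsteinUhlenbeck p (gaussianPoly n q)) hp

theorem mul_norm_toL2_sq_le_of_mem_orthogonal
    {f : sobolevLip (stdGaussian_absolutelyContinuous (n := n))}
    (hf : toL2 _ f ∈ ((mvDegreeLT (Fin n) ℝ l).map (toL2 _ ∘ₗ gaussianPoly n))ᗮ) :
    l * ‖toL2 _ f‖ ^ 2 ≤ ‖gradL2 _ f‖ ^ 2 :=
  isTriangular_ornsteinUhlenbeck.mul_norm_sq_le_norm_sq_of_dense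
    (G := gradL2 _ ∘ₗ gaussianPoly n) Nat.mono_cast
    (fun p q => inner_toL2_ornsteinUhlenbeck p (gaussianPoly n q)) (iSup_mvDegreeLT _ _)
    (topologicalClosure_range_toL2_comp_polySobolev _ _)
    (fun p => inner_toL2_ornsteinUhlenbeck p f) hf

lemma exists_le_map_polyFun_finrank_eq (hk : k ≤ (n + l).choose l) :
    ∃ F ≤ (mvDegreeLT (Fin n) ℝ (l + 1)).map polyFun.toLinearMap, Module.finrank ℝ F = k := by
  have hdim : Module.finrank ℝ ((mvDegreeLT (Fin n) ℝ (l + 1)).map polyFun.toLinearMap) =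
      (n + l).choose l := by
    rw [← (Submodule.equivMapOfInjective _ polyFun_injective _).finrank_eq,
      finrank_mvDegreeLT_succ, Fintype.card_fin]
  exact exists_le_finrank_eq (hk.trans_eq hdim.symm)

theorem lambdaLip_stdGaussian_le (hk : k ≤ (n + l).choose l) :
    lambdaLip (stdGaussian n) k ≤ l := by
  obtain ⟨F, hF, hFk⟩ := exists_le_map_polyFun_finrank_eq hk
  refine lambdaLip_le l.cast_nonneg hFk (fun f hf => ?_) (fun f hf => ?_)
  · obtain ⟨p, -, rfl⟩ := hF hf
    exact (gaussianPoly n p).2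
  · obtain ⟨p, hp, rfl⟩ := hF hf
    have hle := norm_gradL2_gaussianPoly_sq_le hp
    rwa [norm_gradL2_sq, norm_toL2_sq] at hle

lemma le_choose_add (hn : 1 ≤ n) (k : ℕ) : k ≤ (n + k).choose k :=
  calc k ≤ (1 + k).choose k := by
        rw [add_comm, Nat.choose_succ_self_right]
        exact k.le_succ
    _ ≤ (n + k).choose k := Nat.choose_le_choose k (by lia)

theorem le_lambdaLip_stdGaussian (hn : 1 ≤ n) (hk : (n + l).choose l < k) :
    (l : ℝ) + 1 ≤ lambdaLip (stdGaussian n) k := by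
  obtain ⟨F, hF, hFk⟩ := exists_le_map_polyFun_finrank_eq (le_choose_add hn k)
  have hFW : ∀ f ∈ F, memW12Lip (stdGaussian n) f := fun f hf => by
    obtain ⟨p, -, rfl⟩ := hF hf
    exact (gaussianPoly n p).2
  have hdim := Submodule.finrank_map_le
    (toL2 stdGaussian_absolutelyContinuous ∘ₗ gaussianPoly n) (mvDegreeLT (Fin n) ℝ (l + 1))
  rw [finrank_mvDegreeLT_succ, Fintype.card_fin] at hdim
  refine le_lambdaLip_of_forall_mem_orthogonal (hμ := stdGaussian_absolutelyContinuous)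
    ⟨F, hFk, hFW⟩ _ (hdim.trans_lt hk) fun f hf => ?_
  exact_mod_cast mul_norm_toL2_sq_le_of_mem_orthogonal hf

theorem lambdaLip_stdGaussian_le_iff (hn : 1 ≤ n) :
    lambdaLip (stdGaussian n) k ≤ l ↔ k ≤ (n + l).choose l := by
  refine ⟨fun hle => ?_, lambdaLip_stdGaussian_le⟩
  by_contra! hk
  linarith [le_lambdaLip_stdGaussian hn hk]

end GaussianSpectrum

/-- **Eigenvalue counting function of Gaussian space.** For every natural number `l`,
the number of indices `k ≥ 1` with `λ_k^Lip(ℝⁿ,|·|,γⁿ) ≤ l` equals `C(n+l, l)`: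
the eigenvalues of Gaussian space are the non-negative integers, where `l ∈ ℕ` occurs
with multiplicity `C(n-1+l, l)`. -/
theorem gaussian_eigenvalue_counting
    (n : ℕ) (hn : 1 ≤ n) (l : ℕ) :
    Set.ncard {k : ℕ | 1 ≤ k ∧ lambdaLip (stdGaussian n) k ≤ (l : ℝ)} =
      Nat.choose (n + l) l := by
  have hset : {k : ℕ | 1 ≤ k ∧ lambdaLip (stdGaussian n) k ≤ (l : ℝ)} =
      Set.Icc 1 ((n + l).choose l) :=
    Set.ext fun k => and_congr_right fun _ => lambdaLip_stdGaussian_le_iff hn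
  rw [hset, ← Finset.coe_Icc, Set.ncard_coe_finset, Nat.card_Icc, Nat.add_sub_cancel]
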